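/- Let P ⊂ ℝ^7 be the convex hull of the 15 lattice points e_1, e_2, e_3, e_4, e_5, e_6, e_7, −e_7, −e_1+e_7, −e_2+e_7, e_2−e_7, −e_3+e_6, e_2−e_6, −e_2−e_4+e_6, and e_2−e_5−e_7. Then P is an I-isolated smooth Fano 7-polytope with 15 vertices. -/

import Mathlib

/-! ## Basic definitions: lattice polytopes, smooth Fano polytopes,
unimodular equivalence, F- and I-equivalence, primitive collections. -/

/-- A point of `ℝ^n` all of whose coordinates are integers. -/
def IsLatticePoint {n : ℕ} (x : Fin n → ℝ) : Prop := ∀ i, ∃ m : ℤ, x i = (m : ℝ)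

/-- The vertex set of a polytope: its extreme points. -/
def vertexSet {n : ℕ} (P : Set (Fin n → ℝ)) : Set (Fin n → ℝ) :=
  Set.extremePoints ℝ P

/-- A lattice `n`-polytope: the convex hull of finitely many lattice points,
of full dimension `n`. -/
def IsLatticePolytope {n : ℕ} (P : Set (Fin n → ℝ)) : Prop :=
  (∃ S : Finset (Fin n → ℝ), (∀ x ∈ S, IsLatticePoint x) ∧
    P = convexHull ℝ (S : Set (Fin n → ℝ))) ∧
  affineSpan ℝ P = ⊤

/-- A face of `P`: an exposed subset of `P`. -/
def IsFaceOf {n : ℕ} (F P : Set (Fin n → ℝ)) : Prop := IsExposed ℝ P F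

/-- A facet of `P`: a face of affine dimension `n - 1`. -/
def IsFacetOf {n : ℕ} (F P : Set (Fin n → ℝ)) : Prop :=
  IsFaceOf F P ∧ Module.finrank ℝ (vectorSpan ℝ F) + 1 = n

/-- A set `S` of points of `ℝ^n` forms a `ℤ`-basis of `ℤ^n`:
it consists of `n` lattice points whose matrix has determinant `±1`. -/
def IsUnimodularBasis {n : ℕ} (S : Set (Fin n → ℝ)) : Prop :=
  ∃ b : Fin n → (Fin n → ℝ), Function.Injective b ∧ Set.range b = S ∧
    (∀ i, IsLatticePoint (b i)) ∧ |(Matrix.of b).det| = 1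

/-- A smooth Fano `n`-polytope: a lattice `n`-polytope with the origin in its
interior such that the vertex set of every facet is a `ℤ`-basis of `ℤ^n`. -/
def IsSmoothFano {n : ℕ} (P : Set (Fin n → ℝ)) : Prop :=
  IsLatticePolytope P ∧ (0 : Fin n → ℝ) ∈ interior P ∧
    ∀ F : Set (Fin n → ℝ), IsFacetOf F P → IsUnimodularBasis (vertexSet P ∩ F)

/-- Two subsets of `ℝ^n` are unimodularly equivalent if an affine map of `ℝ^n`
mapping `ℤ^n` onto `ℤ^n` maps one onto the other. -/
def UnimodularEquiv {n : ℕ} (Q Q' : Set (Fin n → ℝ)) : Prop :=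
  ∃ φ : (Fin n → ℝ) →ᵃ[ℝ] (Fin n → ℝ),
    φ '' {x | IsLatticePoint x} = {x | IsLatticePoint x} ∧ φ '' Q = Q'

/-- One step of an I-sequence: the vertex set of one polytope is obtained from
the vertex set of the other by adding one new lattice point. -/
def IStep {n : ℕ} (P Q : Set (Fin n → ℝ)) : Prop :=
  (∃ w : Fin n → ℝ, IsLatticePoint w ∧ w ∉ vertexSet P ∧
    vertexSet Q = vertexSet P ∪ {w}) ∨
  (∃ w : Fin n → ℝ, IsLatticePoint w ∧ w ∉ vertexSet Q ∧
    vertexSet P = vertexSet Q ∪ {w})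

/-- I-equivalence of smooth Fano `n`-polytopes. -/
def IEquiv {n : ℕ} (P Q : Set (Fin n → ℝ)) : Prop :=
  ∃ (k : ℕ) (c : Fin (k + 1) → Set (Fin n → ℝ)),
    (∀ i, IsSmoothFano (c i)) ∧
    UnimodularEquiv P (c 0) ∧ UnimodularEquiv Q (c (Fin.last k)) ∧
    ∀ i : Fin k, IStep (c i.castSucc) (c i.succ)

/-- `Q` is the stellar subdivision of `P` at the new vertex `w`: `w` is the sum
of the vertices of a proper face `F` of `P`, and the facets of `Q` containing
`w` are exactly the sets `conv({w} ∪ (V(F') \ {v}))` for `F'` a facet of `P`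
containing `F` and `v` a vertex of `F`. -/
def IsStellarSubdivisionAt {n : ℕ} (P Q : Set (Fin n → ℝ)) (w : Fin n → ℝ) : Prop :=
  ∃ F : Set (Fin n → ℝ), IsFaceOf F P ∧ F.Nonempty ∧ F ≠ P ∧
    w = ∑ᶠ v ∈ vertexSet P ∩ F, v ∧
    {G : Set (Fin n → ℝ) | IsFacetOf G Q ∧ w ∈ G} =
      {G : Set (Fin n → ℝ) | ∃ F' v, IsFacetOf F' P ∧ F ⊆ F' ∧
        v ∈ vertexSet P ∩ F ∧
        G = convexHull ℝ (insert w ((vertexSet P ∩ F') \ {v}))}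

/-- One step of an F-sequence: an I-step which moreover is a stellar
subdivision (or its inverse). -/
def FStep {n : ℕ} (P Q : Set (Fin n → ℝ)) : Prop :=
  (∃ w : Fin n → ℝ, IsLatticePoint w ∧ w ∉ vertexSet P ∧
    vertexSet Q = vertexSet P ∪ {w} ∧ IsStellarSubdivisionAt P Q w) ∨
  (∃ w : Fin n → ℝ, IsLatticePoint w ∧ w ∉ vertexSet Q ∧
    vertexSet P = vertexSet Q ∪ {w} ∧ IsStellarSubdivisionAt Q P w)

/-- F-equivalence of smooth Fano `n`-polytopes. -/
def FEquiv {n : ℕ} (P Q : Set (Fin n → ℝ)) : Prop :=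
  ∃ (k : ℕ) (c : Fin (k + 1) → Set (Fin n → ℝ)),
    (∀ i, IsSmoothFano (c i)) ∧
    UnimodularEquiv P (c 0) ∧ UnimodularEquiv Q (c (Fin.last k)) ∧
    ∀ i : Fin k, FStep (c i.castSucc) (c i.succ)

/-- A smooth Fano polytope is F-isolated if every smooth Fano polytope
F-equivalent to it is unimodularly equivalent to it. -/
def FIsolated {n : ℕ} (P : Set (Fin n → ℝ)) : Prop :=
  ∀ Q : Set (Fin n → ℝ), IsSmoothFano Q → FEquiv Q P → UnimodularEquiv Q P

/-- A smooth Fano polytope is I-isolated if every smooth Fano polytope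
I-equivalent to it is unimodularly equivalent to it. -/
def IIsolated {n : ℕ} (P : Set (Fin n → ℝ)) : Prop :=
  ∀ Q : Set (Fin n → ℝ), IsSmoothFano Q → IEquiv Q P → UnimodularEquiv Q P

/-- A primitive collection of a smooth Fano polytope `P`: a nonempty set `A` of
vertices such that `conv(A)` is not a face of `P` but `conv(A \ {x})` is a face
of `P` for every `x ∈ A`. -/
def IsPrimitiveCollection {n : ℕ} (P A : Set (Fin n → ℝ)) : Prop :=
  A.Nonempty ∧ A ⊆ vertexSet P ∧ ¬ IsFaceOf (convexHull ℝ A) P ∧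
    ∀ x ∈ A, IsFaceOf (convexHull ℝ (A \ {x})) P

/-- The standard basis vector `e_i` of `ℝ^n`. -/
def stdBasis {n : ℕ} (i : Fin n) : Fin n → ℝ := fun q => if q = i then 1 else 0

/-- The polytope `T^n = conv{e_1, …, e_n, -(e_1 + ⋯ + e_n)}`,
corresponding to projective `n`-space. -/
def Tpoly (n : ℕ) : Set (Fin n → ℝ) :=
  convexHull ℝ (Set.range (stdBasis (n := n)) ∪ {fun _ => (-1 : ℝ)})

/-- The 15 lattice points `e_1, …, e_7, -e_7, -e_1+e_7, -e_2+e_7, e_2-e_7,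
-e_3+e_6, e_2-e_6, -e_2-e_4+e_6, e_2-e_5-e_7` of `ℤ^7`. -/
def KNpoints : Set (Fin 7 → ℝ) :=
  {![1, 0, 0, 0, 0, 0, 0], ![0, 1, 0, 0, 0, 0, 0], ![0, 0, 1, 0, 0, 0, 0],
   ![0, 0, 0, 1, 0, 0, 0], ![0, 0, 0, 0, 1, 0, 0], ![0, 0, 0, 0, 0, 1, 0],
   ![0, 0, 0, 0, 0, 0, 1], ![0, 0, 0, 0, 0, 0, -1],
   ![-1, 0, 0, 0, 0, 0, 1], ![0, -1, 0, 0, 0, 0, 1], ![0, 1, 0, 0, 0, 0, -1],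
   ![0, 0, -1, 0, 0, 1, 0], ![0, 1, 0, 0, 0, -1, 0], ![0, -1, 0, -1, 0, 1, 0],
   ![0, 1, 0, 0, -1, 0, -1]}

/-- A linear functional bounded on the extreme points of a compact convex set is bounded there by
the same constant. -/
theorem le_of_forall_vertexSet_le {n : ℕ} {Q : Set (Fin n → ℝ)} (hQ : IsCompact Q)
    (hc : Convex ℝ Q) (l : (Fin n → ℝ) →ₗ[ℝ] ℝ) {c : ℝ} (h : ∀ v ∈ vertexSet Q, l v ≤ c) :
    ∀ x ∈ Q, l x ≤ c := by
  have hcl : IsClosed {x | l x ≤ c} :=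
    isClosed_le l.continuous_of_finiteDimensional continuous_const
  have hconv : Convex ℝ {x | l x ≤ c} := convex_halfSpace_le l.isLinear c
  have := closure_minimal (convexHull_min (s := vertexSet Q) h hconv) hcl
  rw [vertexSet, closure_convexHull_extremePoints hQ hc] at this
  exact this

theorem IsLatticePolytope.isCompact {n : ℕ} {Q : Set (Fin n → ℝ)} (h : IsLatticePolytope Q) :
    IsCompact Q := by
  obtain ⟨⟨S, -, rfl⟩, -⟩ := h
  exact S.finite_toSet.isCompact_convexHull ℝ

theorem IsLatticePolytope.convex {n : ℕ} {Q : Set (Fin n → ℝ)} (h : IsLatticePolytope Q) :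
    Convex ℝ Q := by
  obtain ⟨⟨S, -, rfl⟩, -⟩ := h
  exact convex_convexHull ℝ _

theorem IsLatticePolytope.finite_vertexSet {n : ℕ} {Q : Set (Fin n → ℝ)}
    (h : IsLatticePolytope Q) : (vertexSet Q).Finite := by
  obtain ⟨⟨S, -, rfl⟩, -⟩ := h
  exact S.finite_toSet.subset extremePoints_convexHull_subset

/-- A linear functional which is nonpositive on a neighbourhood of the origin vanishes. -/
theorem eq_zero_of_nonpos_of_mem_interior {n : ℕ} {Q : Set (Fin n → ℝ)} (h0 : 0 ∈ interior Q)
    (l : (Fin n → ℝ) →ₗ[ℝ] ℝ) (h : ∀ x ∈ Q, l x ≤ 0) : l = 0 := by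
  ext1 i
  have key (x : Fin n → ℝ) : l x ≤ 0 := by
    have ht : Filter.Tendsto (fun t : ℝ => t • x) (nhdsWithin 0 (Set.Ioi 0)) (nhds 0) := by
      have : Continuous fun t : ℝ => t • x := by fun_prop
      simpa using (this.tendsto 0).mono_left nhdsWithin_le_nhds
    have hev := ht.eventually (mem_interior_iff_mem_nhds.1 h0)
    obtain ⟨t, htQ, ht0⟩ := (hev.and self_mem_nhdsWithin).exists
    have := h _ htQ
    rw [map_smul, smul_eq_mul] at this
    exact nonpos_of_mul_nonpos_right this ht0
  ext
  refine le_antisymm (key _) ?_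
  have := key (-(LinearMap.single ℝ (fun _ => ℝ) i 1))
  rw [map_neg] at this
  simpa using this

/-- The functionals bounded by `1` on a neighbourhood of the origin form a bounded set. -/
theorem isBounded_polar {n : ℕ} {Q : Set (Fin n → ℝ)} (h0 : 0 ∈ interior Q) :
    Bornology.IsBounded {u : Fin n → ℝ | ∀ x ∈ Q, u ⬝ᵥ x ≤ 1} := by
  obtain ⟨ε, hε, hball⟩ := Metric.mem_nhds_iff.1 (mem_interior_iff_mem_nhds.1 h0)
  refine (Metric.isBounded_closedBall (x := (0 : Fin n → ℝ)) (r := 2 / ε)).subset ?_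
  intro u hu
  rw [mem_closedBall_zero_iff, pi_norm_le_iff_of_nonneg (by positivity)]
  intro i
  have key (s : ℝ) (hs : |s| ≤ ε / 2) : u i * s ≤ 1 := by
    have := hu (Pi.single i s) (hball (by
      rw [mem_ball_zero_iff, Pi.norm_single, Real.norm_eq_abs]; linarith))
    simpa using this
  have h1 := key (ε / 2) (by rw [abs_of_pos (by positivity)])
  have h2 := key (-(ε / 2)) (by rw [abs_neg, abs_of_pos (by positivity)])
  rw [Real.norm_eq_abs, abs_le, ← neg_div, div_le_iff₀ hε, le_div_iff₀ hε]
  constructor <;> linarith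

/-- Any functional bounded by `1` on a polytope can be moved to one whose set of vertices of
value `1` is larger and spans the whole space. -/
theorem exists_spanning_functional {n : ℕ} {Q : Set (Fin n → ℝ)} (hQ : IsCompact Q)
    (hc : Convex ℝ Q) (hfin : (vertexSet Q).Finite) (h0 : 0 ∈ interior Q)
    (l : (Fin n → ℝ) →ₗ[ℝ] ℝ) (hl : ∀ v ∈ vertexSet Q, l v ≤ 1) :
    ∃ l' : (Fin n → ℝ) →ₗ[ℝ] ℝ, (∀ v ∈ vertexSet Q, l' v ≤ 1) ∧
      (∀ v ∈ vertexSet Q, l v = 1 → l' v = 1) ∧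
      ∀ h : (Fin n → ℝ) →ₗ[ℝ] ℝ, (∀ v ∈ vertexSet Q, l' v = 1 → h v = 0) → h = 0 := by
  classical
  let D := dotProductEquiv ℝ (Fin n)
  have hD (u x : Fin n → ℝ) : D u x = u ⬝ᵥ x := rfl
  let K : Set (Fin n → ℝ) := {u | ∀ v ∈ vertexSet Q, u ⬝ᵥ v ≤ 1 ∧ (l v = 1 → u ⬝ᵥ v = 1)}
  have hKc : IsClosed K := by
    have : K = ⋂ v ∈ vertexSet Q, {u | u ⬝ᵥ v ≤ 1 ∧ (l v = 1 → u ⬝ᵥ v = 1)} := by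
      ext u; simp [K]
    rw [this]
    have hcont (v : Fin n → ℝ) : Continuous fun u : Fin n → ℝ => u ⬝ᵥ v := by fun_prop
    refine isClosed_biInter fun v _ => (isClosed_le (hcont v) continuous_const).inter ?_
    by_cases hv : l v = 1
    · simp only [hv, forall_true_left]
      exact isClosed_eq (hcont v) continuous_const
    · simp only [hv, false_imp_iff]
      exact isClosed_univ
  have hKb : Bornology.IsBounded K := (isBounded_polar h0).subset fun u hu =>
    le_of_forall_vertexSet_le hQ hc (D u) fun v hv => (hu v hv).1
  have hne : K.Nonempty := by
    refine ⟨D.symm l, fun v hv => ?_⟩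
    rw [← hD, LinearEquiv.apply_symm_apply]
    exact ⟨hl v hv, id⟩
  obtain ⟨u, huK, hu⟩ := (Metric.isCompact_of_isClosed_isBounded hKc hKb).extremePoints_nonempty hne
  refine ⟨D u, fun v hv => (huK v hv).1, fun v hv => (huK v hv).2, fun h hh => ?_⟩
  obtain ⟨g, rfl⟩ := D.surjective h
  have hev : ∀ᶠ δ : ℝ in nhdsWithin 0 (Set.Ioi 0), ∀ v ∈ vertexSet Q,
      u ⬝ᵥ v = 1 ∨ |δ * (g ⬝ᵥ v)| < 1 - u ⬝ᵥ v := by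
    rw [Filter.eventually_all_finite hfin]
    intro v hv
    by_cases h1 : u ⬝ᵥ v = 1
    · simp [h1]
    · have hlt : u ⬝ᵥ v < 1 := lt_of_le_of_ne (huK v hv).1 h1
      have hcont : Continuous fun δ : ℝ => |δ * (g ⬝ᵥ v)| := by fun_prop
      have := (hcont.tendsto 0).mono_left (nhdsWithin_le_nhds (s := Set.Ioi 0))
      refine (this.eventually_lt_const (u := 1 - u ⬝ᵥ v) (by simpa using hlt)).mono ?_
      exact fun _ => Or.inr
  obtain ⟨δ, hδ, hδ0⟩ := (hev.and self_mem_nhdsWithin).exists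
  have hmem (s : ℝ) (hs : |s| = δ) : u + s • g ∈ K := by
    intro v hv
    rw [add_dotProduct, smul_dotProduct, smul_eq_mul]
    by_cases h1 : u ⬝ᵥ v = 1
    · have : g ⬝ᵥ v = 0 := hh v hv h1
      simp [h1, this]
    · refine ⟨?_, fun h2 => absurd ((huK v hv).2 h2) h1⟩
      have h3 := (hδ v hv).resolve_left h1
      rw [abs_mul, ← hs, abs_abs, ← abs_mul] at h3
      linarith [le_abs_self (s * (g ⬝ᵥ v))]
  have hδ' : 0 < δ := hδ0
  have heq := hu (hmem (-δ) (by rw [abs_neg, abs_of_pos hδ'])) (hmem δ (abs_of_pos hδ'))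
    ⟨1 / 2, 1 / 2, by norm_num, by norm_num, by norm_num, by
      ext i; simp; ring⟩
  have hg : δ • g = 0 := by simpa using heq
  rw [(smul_eq_zero.1 hg).resolve_left hδ'.ne', map_zero]

/-- A functional whose vertices of value `1` span the space supports a facet. -/
theorem isFacetOf_of_spanning {n : ℕ} (hn : n ≠ 0) {Q : Set (Fin n → ℝ)} (hQ : IsCompact Q)
    (hc : Convex ℝ Q) (l : (Fin n → ℝ) →ₗ[ℝ] ℝ) (hl : ∀ v ∈ vertexSet Q, l v ≤ 1)
    (hspan : ∀ h : (Fin n → ℝ) →ₗ[ℝ] ℝ, (∀ v ∈ vertexSet Q, l v = 1 → h v = 0) → h = 0) :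
    IsFacetOf {x ∈ Q | l x = 1} Q := by
  have hle := le_of_forall_vertexSet_le hQ hc l hl
  obtain ⟨v₀, hv₀, hlv₀⟩ : ∃ v ∈ vertexSet Q, l v = 1 := by
    by_contra! hcon
    have := hspan (LinearMap.proj ⟨0, Nat.pos_of_ne_zero hn⟩) fun v hv h => absurd h (hcon v hv)
    simpa using LinearMap.congr_fun this (fun _ => 1)
  have hv₀F : v₀ ∈ {x ∈ Q | l x = 1} := ⟨hv₀.1, hlv₀⟩
  refine ⟨fun _ => ⟨LinearMap.toContinuousLinearMap l, ?_⟩, ?_⟩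
  · ext x
    simp only [Set.mem_sep_iff, LinearMap.coe_toContinuousLinearMap']
    refine and_congr_right fun hx => ⟨fun h y hy => h ▸ hle y hy, fun h => ?_⟩
    exact le_antisymm (hle x hx) (hlv₀ ▸ h v₀ hv₀.1)
  · set W := vectorSpan ℝ {x ∈ Q | l x = 1}
    have hW : W ≤ LinearMap.ker l := by
      refine Submodule.span_le.2 ?_
      rintro _ ⟨x, hx, y, hy, rfl⟩
      simp [hx.2, hy.2]
    have htop : W ⊔ Submodule.span ℝ {v₀} = ⊤ := by
      by_contra hne
      obtain ⟨f, hf0, hf⟩ := Submodule.exists_le_ker_of_lt_top _ (lt_top_iff_ne_top.2 hne)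
      refine hf0 (hspan f fun v hv hv1 => ?_)
      have h1 : v -ᵥ v₀ ∈ W := vsub_mem_vectorSpan ℝ ⟨hv.1, hv1⟩ hv₀F
      have h2 := hf (Submodule.mem_sup_left h1)
      have h3 := hf (Submodule.mem_sup_right (Submodule.mem_span_singleton_self v₀))
      simp only [LinearMap.mem_ker, vsub_eq_sub, map_sub] at h2 h3
      linarith
    have hdis : W ⊓ Submodule.span ℝ {v₀} = ⊥ := by
      rw [← disjoint_iff, Submodule.disjoint_span_singleton]
      intro h
      have := hW h
      rw [LinearMap.mem_ker, hlv₀] at this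
      exact absurd this one_ne_zero
    have hsum := Submodule.finrank_sup_add_finrank_inf_eq W (Submodule.span ℝ {v₀})
    have hv0 : v₀ ≠ 0 := by rintro rfl; simp at hlv₀
    rw [htop, hdis, finrank_top, finrank_bot, finrank_span_singleton hv0,
      Module.finrank_fin_fun] at hsum
    omega

/-- Lattice points are integral combinations of a unimodular basis. -/
theorem exists_int_combination {n : ℕ} {b : Fin n → Fin n → ℝ} (hb : ∀ i, IsLatticePoint (b i))
    (hdet : |(Matrix.of b).det| = 1) {x : Fin n → ℝ} (hx : IsLatticePoint x) :
    ∃ k : Fin n → ℤ, x = ∑ i, (k i : ℝ) • b i := by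
  choose B hB using hb
  choose y hy using hx
  let M : Matrix (Fin n) (Fin n) ℤ := Matrix.of B
  have hM : Matrix.of b = (Int.castRingHom ℝ).mapMatrix M := by
    ext i j; simp [M, hB]
  have hdetM : IsUnit M.det := by
    rw [hM, ← RingHom.map_det] at hdet
    rw [Int.isUnit_iff_abs_eq]
    have : ((|M.det| : ℤ) : ℝ) = 1 := by simpa using hdet
    exact_mod_cast this
  refine ⟨Matrix.vecMul y M⁻¹, ?_⟩
  have h1 : Matrix.vecMul (Matrix.vecMul y M⁻¹) M = y := by
    rw [Matrix.vecMul_vecMul, Matrix.nonsing_inv_mul _ hdetM, Matrix.vecMul_one]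
  ext j
  have h2 := congrFun h1 j
  rw [hy, ← h2]
  simp only [Matrix.vecMul, dotProduct, Finset.sum_apply, Pi.smul_apply, smul_eq_mul, M,
    Matrix.of_apply, hB]
  push_cast
  rfl

/-- The consequences of being the vertex set of a smooth Fano polytope that are used to
obstruct the insertion and the deletion of a vertex. -/
structure SmoothFanoVertices {n : ℕ} (S : Set (Fin n → ℝ)) : Prop where
  eq_zero_of_nonpos : ∀ l : (Fin n → ℝ) →ₗ[ℝ] ℝ, (∀ v ∈ S, l v ≤ 0) → l = 0
  exists_basis : ∀ l : (Fin n → ℝ) →ₗ[ℝ] ℝ, (∀ v ∈ S, l v ≤ 1) →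
    ∃ b : Fin n → Fin n → ℝ, (∀ v ∈ S, l v = 1 → v ∈ Set.range b) ∧
      ∀ x, IsLatticePoint x → ∃ k : Fin n → ℤ, x = ∑ i, (k i : ℝ) • b i
  notMem_convexHull : ∀ v ∈ S, v ∉ convexHull ℝ (S \ {v})

theorem IsSmoothFano.smoothFanoVertices {n : ℕ} (hn : n ≠ 0) {Q : Set (Fin n → ℝ)}
    (h : IsSmoothFano Q) : SmoothFanoVertices (vertexSet Q) := by
  obtain ⟨hP, h0, hF⟩ := h
  refine ⟨fun l hl => ?_, fun l hl => ?_, ?_⟩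
  · exact eq_zero_of_nonpos_of_mem_interior h0 l
      (le_of_forall_vertexSet_le hP.isCompact hP.convex l hl)
  · obtain ⟨l', h1, h2, h3⟩ :=
      exists_spanning_functional hP.isCompact hP.convex hP.finite_vertexSet h0 l hl
    obtain ⟨b, -, hr, hlat, hdet⟩ := hF _ (isFacetOf_of_spanning hn hP.isCompact hP.convex l' h1 h3)
    refine ⟨b, fun v hv hv1 => ?_, fun x hx => exists_int_combination hlat hdet hx⟩
    rw [hr]
    exact ⟨hv, hv.1, h2 v hv hv1⟩
  · exact convexIndependent_set_iff_notMem_convexHull_sdiff.1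
      hP.convex.convexIndependent_extremePoints

theorem isLatticePoint_zero {n : ℕ} : IsLatticePoint (0 : Fin n → ℝ) := fun _ => ⟨0, by simp⟩

theorem isLatticePoint_intCast {n : ℕ} (w : Fin n → ℤ) : IsLatticePoint fun i => (w i : ℝ) :=
  fun i => ⟨w i, rfl⟩

/-- An affine map which maps the lattice onto itself is invertible. -/
theorem UnimodularEquiv.exists_affineEquiv {n : ℕ} {Q Q' : Set (Fin n → ℝ)}
    (h : UnimodularEquiv Q Q') : ∃ e : (Fin n → ℝ) ≃ᵃ[ℝ] (Fin n → ℝ),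
      e '' {x | IsLatticePoint x} = {x | IsLatticePoint x} ∧ e '' Q = Q' := by
  obtain ⟨φ, hφ, hQ⟩ := h
  have hmem (x : Fin n → ℝ) (hx : IsLatticePoint x) : ∃ y, φ y = x := by
    have : x ∈ φ '' {x | IsLatticePoint x} := hφ.ge hx
    exact this.imp fun _ => And.right
  have hsurj : Function.Surjective φ.linear := by
    rw [← LinearMap.range_eq_top, eq_top_iff, ← (Pi.basisFun ℝ (Fin n)).span_eq,
      Submodule.span_le]
    rintro _ ⟨i, rfl⟩
    obtain ⟨y, hy⟩ := hmem (Pi.basisFun ℝ (Fin n) i) fun j => by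
      by_cases hij : j = i
      · exact ⟨1, by simp [hij]⟩
      · exact ⟨0, by simp [hij]⟩
    obtain ⟨z, hz⟩ := hmem 0 isLatticePoint_zero
    refine ⟨y -ᵥ z, ?_⟩
    rw [φ.linearMap_vsub, hy, hz, vsub_eq_sub, sub_zero]
  have hbij : Function.Bijective φ :=
    φ.linear_bijective_iff.1 ⟨LinearMap.injective_iff_surjective.2 hsurj, hsurj⟩
  exact ⟨AffineEquiv.ofBijective hbij, hφ, hQ⟩

theorem UnimodularEquiv.symm {n : ℕ} {Q Q' : Set (Fin n → ℝ)} (h : UnimodularEquiv Q Q') :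
    UnimodularEquiv Q' Q := by
  obtain ⟨e, he, rfl⟩ := h.exists_affineEquiv
  refine ⟨e.symm, ?_, ?_⟩
  · conv_lhs => rw [← he]
    simp [Set.image_image]
  · simp [Set.image_image]

theorem UnimodularEquiv.trans {n : ℕ} {Q Q' Q'' : Set (Fin n → ℝ)} (h : UnimodularEquiv Q Q')
    (h' : UnimodularEquiv Q' Q'') : UnimodularEquiv Q Q'' := by
  obtain ⟨φ, hφ, rfl⟩ := h
  obtain ⟨ψ, hψ, rfl⟩ := h'
  exact ⟨ψ.comp φ, by rw [AffineMap.coe_comp, Set.image_comp, hφ, hψ],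
    by rw [AffineMap.coe_comp, Set.image_comp]⟩

/-- The conditions `SmoothFanoVertices` pull back along linear automorphisms of the lattice. -/
theorem SmoothFanoVertices.of_image {n : ℕ} (A : (Fin n → ℝ) ≃ₗ[ℝ] (Fin n → ℝ))
    (hA : ∀ x, IsLatticePoint x → IsLatticePoint (A x)) {S : Set (Fin n → ℝ)}
    (h : SmoothFanoVertices (A '' S)) : SmoothFanoVertices S := by
  refine ⟨fun l hl => ?_, fun l hl => ?_, fun v hv hv' => ?_⟩
  · have := h.eq_zero_of_nonpos (l ∘ₗ A.symm.toLinearMap) (by simpa using hl)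
    ext1 x
    ext1
    simpa using LinearMap.congr_fun this (A (LinearMap.single ℝ (fun _ => ℝ) x 1))
  · obtain ⟨b, hb, hb'⟩ := h.exists_basis (l ∘ₗ A.symm.toLinearMap) (by simpa using hl)
    refine ⟨fun i => A.symm (b i), fun v hv hv1 => ?_, fun x hx => ?_⟩
    · obtain ⟨i, hi⟩ := hb (A v) ⟨v, hv, rfl⟩ (by simpa using hv1)
      exact ⟨i, by simp [hi]⟩
    · obtain ⟨k, hk⟩ := hb' (A x) (hA x hx)
      refine ⟨k, A.injective ?_⟩
      simpa using hk
  · refine h.notMem_convexHull (A v) ⟨v, hv, rfl⟩ ?_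
    rw [← Set.image_singleton, ← Set.image_sdiff A.injective]
    have := A.toLinearMap.image_convexHull (S \ {v})
    rw [LinearEquiv.coe_coe] at this
    rw [← this]
    exact ⟨v, hv', rfl⟩

/-- A lattice polytope whose vertex set can neither be enlarged nor reduced by one lattice point
to a set satisfying `SmoothFanoVertices` is I-isolated. -/
theorem iIsolated_of_not_smoothFanoVertices {n : ℕ} (hn : n ≠ 0) {P : Set (Fin n → ℝ)}
    (hlattice : ∀ x ∈ interior P, IsLatticePoint x → x = 0)
    (hins : ∀ w, IsLatticePoint w → w ∉ vertexSet P → ¬ SmoothFanoVertices (vertexSet P ∪ {w}))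
    (hdel : ∀ w ∈ vertexSet P, ¬ SmoothFanoVertices (vertexSet P \ {w})) : IIsolated P := by
  rintro Q - ⟨k, c, hc, hQ, hP, hstep⟩
  cases k with
  | zero => exact hQ.trans hP.symm
  | succ k =>
    exfalso
    obtain ⟨e, he, hPe⟩ := hP.exists_affineEquiv
    have he0 : e 0 = 0 := by
      obtain ⟨x, hx, hx0⟩ : (0 : Fin n → ℝ) ∈ e '' {x | IsLatticePoint x} :=
        he.ge isLatticePoint_zero
      have h0 := (hc (Fin.last (k + 1))).2.1
      have himg : e '' interior P = interior (e '' P) :=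
        e.toContinuousAffineEquiv.toHomeomorph.image_interior P
      rw [← hPe, ← himg] at h0
      obtain ⟨y, hy, hy0⟩ := h0
      obtain rfl : x = y := e.injective (hx0.trans hy0.symm)
      rwa [hlattice x hy hx] at hx0
    let A := e.linear
    have hA : ⇑A = ⇑e := by
      ext1 x
      have := e.map_vadd 0 x
      simpa [he0] using this.symm
    have hlat (x : Fin n → ℝ) (hx : IsLatticePoint x) : IsLatticePoint (A x) := by
      have : e x ∈ {x | IsLatticePoint x} := he.le ⟨x, hx, rfl⟩
      rwa [hA]
    have hV : vertexSet (c (Fin.last (k + 1))) = A '' vertexSet P := by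
      rw [← hPe, ← hA, vertexSet, vertexSet, image_extremePoints]
    have hR := (hc (Fin.last k).castSucc).smoothFanoVertices hn
    have hs := hstep (Fin.last k)
    rw [Fin.succ_last] at hs
    rcases hs with ⟨w, hw, hwR, hVw⟩ | ⟨w, hw, hwP, hVw⟩
    · have hRV : vertexSet (c (Fin.last k).castSucc) = A '' (vertexSet P \ {A.symm w}) := by
        rw [Set.image_sdiff A.injective, ← hV, hVw]
        simpa using (Set.sdiff_singleton_eq_self hwR).symm
      refine hdel (A.symm w) ?_ ((hRV ▸ hR).of_image A hlat)
      have : w ∈ A '' vertexSet P := by rw [← hV, hVw]; simp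
      obtain ⟨v, hv, rfl⟩ := this
      simpa using hv
    · obtain ⟨y, hy, rfl⟩ : w ∈ A '' {x | IsLatticePoint x} := by rw [hA, he]; exact hw
      have hRV : vertexSet (c (Fin.last k).castSucc) = A '' (vertexSet P ∪ {y}) := by
        rw [hVw, hV, Set.image_union, Set.image_singleton]
      refine hins y hy (fun h => hwP ?_) ((hRV ▸ hR).of_image A hlat)
      rw [hV]
      exact ⟨y, h, rfl⟩

/-- The linear functional with given integral coordinates. -/
def intFunctional {n : ℕ} (u : Fin n → ℤ) : (Fin n → ℝ) →ₗ[ℝ] ℝ :=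
  dotProductEquiv ℝ (Fin n) fun i => (u i : ℝ)

theorem intFunctional_apply {n : ℕ} (u : Fin n → ℤ) (x : Fin n → ℝ) :
    intFunctional u x = ∑ i, (u i : ℝ) * x i := rfl

theorem intFunctional_intCast {n : ℕ} (u w : Fin n → ℤ) :
    intFunctional u (fun i => (w i : ℝ)) = ((u ⬝ᵥ w : ℤ) : ℝ) := by
  simp [intFunctional_apply, dotProduct]

/-- The points of `KNpoints`, with integral coordinates. -/
def knVec : Fin 15 → Fin 7 → ℤ :=
  ![![1, 0, 0, 0, 0, 0, 0], ![0, 1, 0, 0, 0, 0, 0], ![0, 0, 1, 0, 0, 0, 0],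
    ![0, 0, 0, 1, 0, 0, 0], ![0, 0, 0, 0, 1, 0, 0], ![0, 0, 0, 0, 0, 1, 0],
    ![0, 0, 0, 0, 0, 0, 1], ![0, 0, 0, 0, 0, 0, -1],
    ![-1, 0, 0, 0, 0, 0, 1], ![0, -1, 0, 0, 0, 0, 1], ![0, 1, 0, 0, 0, 0, -1],
    ![0, 0, -1, 0, 0, 1, 0], ![0, 1, 0, 0, 0, -1, 0], ![0, -1, 0, -1, 0, 1, 0],
    ![0, 1, 0, 0, -1, 0, -1]]

/-- The points of `KNpoints`, indexed by `Fin 15`. -/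
def knPoint (i : Fin 15) : Fin 7 → ℝ := fun j => (knVec i j : ℝ)

theorem knPoint_injective : Function.Injective knPoint := by
  have h : Function.Injective knVec := by decide +kernel
  intro i j hij
  refine h (funext fun k => ?_)
  have := congrFun hij k
  simpa [knPoint] using this

theorem KNpoints_eq_range : KNpoints = Set.range knPoint := by
  have key (a b c d e f g : ℤ) : (fun j => ((![a, b, c, d, e, f, g] j : ℤ) : ℝ)) =
      ![(a : ℝ), b, c, d, e, f, g] := by
    ext j; fin_cases j <;> rfl
  have h (i : Fin 15) : knPoint i = fun j => (knVec i j : ℝ) := rfl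
  ext x
  simp only [KNpoints, Set.mem_range, Set.mem_insert_iff, Set.mem_singleton_iff,
    Fin.exists_fin_succ, h]
  simp [knVec, key, eq_comm]

/-- The values at `e₂, e₆, e₇` of the functionals supporting the facets. -/
def knBase : Fin 12 → Fin 3 → ℤ :=
  ![![1, 1, 1], ![1, 1, 0], ![0, 1, -1], ![-1, 1, -1], ![-1, 1, 0], ![0, 1, 1], ![-2, 0, -1],
    ![1, 0, 1], ![1, 0, 0], ![0, -1, -1], ![0, -1, 1], ![-2, -3, -1]]

/-- The functionals supporting the facets of the polytope: `c₁` tells which one of `e₁` and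
`-e₁ + e₇` lies in the facet, and similarly for `c₃`, `c₄`, `c₅`. -/
def knFacet (t : Fin 12) (c₁ c₃ c₄ c₅ : Bool) : Fin 7 → ℤ :=
  ![if c₁ then 1 else knBase t 2 - 1, knBase t 0, if c₃ then 1 else knBase t 1 - 1,
    if c₄ then 1 else knBase t 1 - knBase t 0 - 1, if c₅ then 1 else knBase t 0 - knBase t 2 - 1,
    knBase t 1, knBase t 2]

theorem knFacet_le_one : ∀ t c₁ c₃ c₄ c₅ i, knFacet t c₁ c₃ c₄ c₅ ⬝ᵥ knVec i ≤ 1 := by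
  decide +kernel

theorem mul_le_mul_endpoint {a b t : ℝ} (k : ℝ) (ha : a ≤ t) (hb : t ≤ b) :
    k * t ≤ k * a ∨ k * t ≤ k * b := by
  rcases le_total 0 k with hk | hk
  · exact Or.inr (mul_le_mul_of_nonneg_left hb hk)
  · exact Or.inl (mul_le_mul_of_nonpos_left ha hk)

/-- The points `knBase t` are the vertices of the three-dimensional polytope given by the
stated inequalities. -/
theorem exists_knBase_le {p q r : ℝ} (hp : p ≤ 1) (hq : q ≤ 1) (hr : r ≤ 1) (hr' : -r ≤ 1)
    (hrp : -p + r ≤ 1) (hpr : p - r ≤ 1) (hpq : p - q ≤ 1) (hqp : q - p ≤ 2) (β γ δ : ℝ) :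
    ∃ t, β * p + γ * q + δ * r ≤ β * knBase t 0 + γ * knBase t 1 + δ * knBase t 2 := by
  have hr0 : -1 ≤ r := by linarith
  have hp2 : -2 ≤ p := by linarith
  have hr1 : r ≤ p + 1 := by linarith
  have hr2 : p - 1 ≤ r := by linarith
  by_contra! h
  simp only [Fin.forall_fin_succ, knBase] at h
  simp at h
  obtain ⟨hA, hB, hC, hC', hE', hE, hD, ha, hb, hc, he, hd⟩ := h
  have close (a b q₀ q₁ q₂ q₃ r₀ r₁ r₂ r₃ : ℝ) (ha : a ≤ p) (hb : p ≤ b)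
      (hq₁ : q₀ + q₁ * p ≤ q) (hq₂ : q ≤ q₂ + q₃ * p)
      (hr₁ : r₀ + r₁ * p ≤ r) (hr₂ : r ≤ r₂ + r₃ * p) :
      ∃ x, (x = a ∨ x = b) ∧ ∃ y, (y = q₀ + q₁ * x ∨ y = q₂ + q₃ * x) ∧
        ∃ z, (z = r₀ + r₁ * x ∨ z = r₂ + r₃ * x) ∧
          β * p + γ * q + δ * r ≤ β * x + γ * y + δ * z := by
    have main (s s' t t' : ℝ) (hs : γ * q ≤ γ * (s + s' * p)) (ht : δ * r ≤ δ * (t + t' * p)) :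
        ∃ x, (x = a ∨ x = b) ∧ β * p + γ * q + δ * r ≤
          β * x + γ * (s + s' * x) + δ * (t + t' * x) := by
      rcases mul_le_mul_endpoint (β + γ * s' + δ * t') ha hb with h | h
      · exact ⟨a, .inl rfl, by linarith⟩
      · exact ⟨b, .inr rfl, by linarith⟩
    rcases mul_le_mul_endpoint γ hq₁ hq₂ with h1 | h1 <;>
    rcases mul_le_mul_endpoint δ hr₁ hr₂ with h2 | h2 <;>
    obtain ⟨x, hx, h3⟩ := main _ _ _ _ h1 h2
    · exact ⟨x, hx, _, .inl rfl, _, .inl rfl, h3⟩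
    · exact ⟨x, hx, _, .inl rfl, _, .inr rfl, h3⟩
    · exact ⟨x, hx, _, .inr rfl, _, .inl rfl, h3⟩
    · exact ⟨x, hx, _, .inr rfl, _, .inr rfl, h3⟩
  rcases le_total p (-1) with h1 | h1
  · obtain ⟨x, rfl | rfl, y, rfl | rfl, z, rfl | rfl, h⟩ := close (-2) (-1) (-1) 1 2 1 (-1) 0 1 1
      hp2 h1 (by linarith) (by linarith) (by linarith) (by linarith) <;> linarith
  rcases le_total p 0 with h0 | h0
  · obtain ⟨x, rfl | rfl, y, rfl | rfl, z, rfl | rfl, h⟩ := close (-1) 0 (-1) 1 1 0 (-1) 0 1 1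
      h1 h0 (by linarith) (by linarith) (by linarith) (by linarith) <;> linarith
  · obtain ⟨x, rfl | rfl, y, rfl | rfl, z, rfl | rfl, h⟩ := close 0 1 (-1) 1 1 0 (-1) 1 1 0
      h0 hp (by linarith) (by linarith) (by linarith) (by linarith) <;> linarith

/-- Every functional bounded by `1` on the polytope is dominated, at any given point, by one of
the functionals supporting the facets. -/
theorem exists_le_knFacet (l : (Fin 7 → ℝ) →ₗ[ℝ] ℝ) (hl : ∀ i, l (knPoint i) ≤ 1)
    (x : Fin 7 → ℝ) : ∃ t c₁ c₃ c₄ c₅, l x ≤ intFunctional (knFacet t c₁ c₃ c₄ c₅) x := by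
  obtain ⟨u, rfl⟩ := (dotProductEquiv ℝ (Fin 7)).surjective l
  have hD (y : Fin 7 → ℝ) : dotProductEquiv ℝ (Fin 7) u y = ∑ j, u j * y j := rfl
  simp only [hD, intFunctional_apply, Fin.sum_univ_seven, Fin.forall_fin_succ, knPoint,
    knVec] at hl ⊢
  simp at hl
  obtain ⟨h0, h1, h2, h3, h4, h5, h6, h7, h8, h9, h10, h11, h12, h13, h14⟩ := hl
  have endpoint {a b : ℝ} (y : ℝ) (h : a ≤ b) (h' : b ≤ 1) :
      ∃ c : Bool, b * y ≤ (if c then 1 else a) * y := by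
    rcases mul_le_mul_endpoint y h h' with hy | hy
    · exact ⟨false, by simpa [mul_comm] using hy⟩
    · exact ⟨true, by simpa [mul_comm] using hy⟩
  obtain ⟨c₁, hc₁⟩ := endpoint (a := u 6 - 1) (x 0) (by linarith) h0
  obtain ⟨c₃, hc₃⟩ := endpoint (a := u 5 - 1) (x 2) (by linarith) h2
  obtain ⟨c₄, hc₄⟩ := endpoint (a := u 5 - u 1 - 1) (x 3) (by linarith) h3
  obtain ⟨c₅, hc₅⟩ := endpoint (a := u 1 - u 6 - 1) (x 4) (by linarith) h4
  obtain ⟨t, ht⟩ := exists_knBase_le h1 h5 h6 h7 (by linarith) (by linarith) (by linarith)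
    (by linarith) (x 1 - (if c₄ then 0 else x 3) + (if c₅ then 0 else x 4))
    (x 5 + (if c₃ then 0 else x 2) + (if c₄ then 0 else x 3))
    (x 6 + (if c₁ then 0 else x 0) - (if c₅ then 0 else x 4))
  refine ⟨t, c₁, c₃, c₄, c₅, ?_⟩
  simp only [knFacet]
  simp
  cases c₁ <;> cases c₃ <;> cases c₄ <;> cases c₅ <;> simp at hc₁ hc₃ hc₄ hc₅ ht ⊢ <;> linarith

theorem intFunctional_knPoint (u : Fin 7 → ℤ) (i : Fin 15) :
    intFunctional u (knPoint i) = ((u ⬝ᵥ knVec i : ℤ) : ℝ) :=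
  intFunctional_intCast u (knVec i)

theorem intFunctional_knFacet_le_one (t : Fin 12) (c₁ c₃ c₄ c₅ : Bool) (i : Fin 15) :
    intFunctional (knFacet t c₁ c₃ c₄ c₅) (knPoint i) ≤ 1 := by
  rw [intFunctional_knPoint]
  exact_mod_cast knFacet_le_one t c₁ c₃ c₄ c₅ i

theorem zero_mem_convexHull_knPoint : (0 : Fin 7 → ℝ) ∈ convexHull ℝ (Set.range knPoint) := by
  have h := (convex_convexHull ℝ (Set.range knPoint))
    (subset_convexHull ℝ _ ⟨6, rfl⟩) (subset_convexHull ℝ _ ⟨7, rfl⟩)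
    (a := 1 / 2) (b := 1 / 2) (by norm_num) (by norm_num) (by norm_num)
  convert h
  ext j
  fin_cases j <;> simp [knPoint, knVec]

/-- The polytope is cut out by the functionals `knFacet`. -/
theorem mem_convexHull_knPoint_iff (x : Fin 7 → ℝ) : x ∈ convexHull ℝ (Set.range knPoint) ↔
    ∀ t c₁ c₃ c₄ c₅, intFunctional (knFacet t c₁ c₃ c₄ c₅) x ≤ 1 := by
  constructor
  · intro hx t c₁ c₃ c₄ c₅
    have hsub : Set.range knPoint ⊆ {y | intFunctional (knFacet t c₁ c₃ c₄ c₅) y ≤ 1} := by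
      rintro _ ⟨i, rfl⟩
      exact intFunctional_knFacet_le_one t c₁ c₃ c₄ c₅ i
    exact convexHull_min hsub
      (convex_halfSpace_le (intFunctional (knFacet t c₁ c₃ c₄ c₅)).isLinear 1) hx
  · intro h
    by_contra hx
    obtain ⟨f, s, hs, hsx⟩ := geometric_hahn_banach_closed_point (convex_convexHull ℝ _)
      ((Set.finite_range knPoint).isClosed_convexHull ℝ) hx
    have hs0 : 0 < s := by simpa using hs 0 zero_mem_convexHull_knPoint
    obtain ⟨t, c₁, c₃, c₄, c₅, hle⟩ := exists_le_knFacet (s⁻¹ • (f : (Fin 7 → ℝ) →ₗ[ℝ] ℝ))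
      (fun i => by
        have := hs _ (subset_convexHull ℝ _ ⟨i, rfl⟩)
        rw [LinearMap.smul_apply, smul_eq_mul, inv_mul_le_one₀ hs0]
        exact this.le) x
    have h1 := hle.trans (h t c₁ c₃ c₄ c₅)
    rw [LinearMap.smul_apply, smul_eq_mul, inv_mul_le_one₀ hs0] at h1
    exact absurd hsx (not_lt.2 h1)

theorem lt_one_of_mem_interior {n : ℕ} {Q : Set (Fin n → ℝ)} {l : (Fin n → ℝ) →ₗ[ℝ] ℝ}
    (hl0 : l ≠ 0) (hl : ∀ x ∈ Q, l x ≤ 1) {x : Fin n → ℝ} (hx : x ∈ interior Q) : l x < 1 := by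
  have hopen : IsOpenMap l :=
    l.isOpenMap_of_finiteDimensional (LinearMap.surjective hl0)
  have h1 : l '' interior Q ⊆ interior (Set.Iic 1) :=
    interior_maximal (Set.image_subset_iff.2 fun y hy => hl y (interior_subset hy))
      (hopen _ isOpen_interior)
  simpa using h1 ⟨x, hx, rfl⟩

theorem zero_mem_interior_convexHull_knPoint :
    (0 : Fin 7 → ℝ) ∈ interior (convexHull ℝ (Set.range knPoint)) := by
  refine mem_interior.2 ⟨⋂ t, ⋂ c₁, ⋂ c₃, ⋂ c₄, ⋂ c₅,
    {x | intFunctional (knFacet t c₁ c₃ c₄ c₅) x < 1}, fun x hx => ?_, ?_, by simp⟩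
  · simp only [Set.mem_iInter] at hx
    exact (mem_convexHull_knPoint_iff x).2 fun t c₁ c₃ c₄ c₅ => (hx t c₁ c₃ c₄ c₅).le
  · refine isOpen_iInter_of_finite fun t => isOpen_iInter_of_finite fun c₁ =>
      isOpen_iInter_of_finite fun c₃ => isOpen_iInter_of_finite fun c₄ =>
      isOpen_iInter_of_finite fun c₅ => ?_
    exact isOpen_lt (LinearMap.continuous_of_finiteDimensional _) continuous_const

/-- A point at which the functionals `knFacet` are nonpositive vanishes. -/
theorem eq_zero_of_knFacet_nonpos {x : Fin 7 → ℝ}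
    (h : ∀ t c₁ c₃ c₄ c₅, intFunctional (knFacet t c₁ c₃ c₄ c₅) x ≤ 0) : x = 0 := by
  have habs : ∀ i j, |knVec i j| ≤ 1 := by decide +kernel
  ext j
  have key (s : ℝ) (hs : |s| = 1) : s * x j ≤ 0 := by
    obtain ⟨t, c₁, c₃, c₄, c₅, hle⟩ := exists_le_knFacet (s • LinearMap.proj j) (fun i => by
      have h1 : |((knVec i j : ℤ) : ℝ)| ≤ 1 := by exact_mod_cast habs i j
      refine (le_abs_self _).trans ?_
      simpa [knPoint, abs_mul, hs] using h1) x
    exact hle.trans (h t c₁ c₃ c₄ c₅)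
  exact le_antisymm (by simpa using key 1 (by simp)) (by simpa using key (-1) (by simp))

theorem knFacet_ne_zero (t : Fin 12) (c₁ c₃ c₄ c₅ : Bool) :
    intFunctional (knFacet t c₁ c₃ c₄ c₅) ≠ 0 := by
  have key : ∀ t c₁ c₃ c₄ c₅, ∃ i, knFacet t c₁ c₃ c₄ c₅ ⬝ᵥ knVec i = 1 := by decide +kernel
  obtain ⟨i, hi⟩ := key t c₁ c₃ c₄ c₅
  intro h
  have h1 := intFunctional_knPoint (knFacet t c₁ c₃ c₄ c₅) i
  rw [h, hi] at h1
  simp at h1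

theorem eq_zero_of_mem_interior_convexHull_knPoint {x : Fin 7 → ℝ}
    (hx : x ∈ interior (convexHull ℝ (Set.range knPoint))) (hlat : IsLatticePoint x) : x = 0 := by
  choose w hw using hlat
  obtain rfl : x = fun j => (w j : ℝ) := funext hw
  refine eq_zero_of_knFacet_nonpos fun t c₁ c₃ c₄ c₅ => ?_
  have h := lt_one_of_mem_interior (knFacet_ne_zero t c₁ c₃ c₄ c₅)
    (fun y hy => (mem_convexHull_knPoint_iff y).1 hy t c₁ c₃ c₄ c₅) hx
  rw [intFunctional_intCast] at h ⊢
  have h1 : knFacet t c₁ c₃ c₄ c₅ ⬝ᵥ w < 1 := by exact_mod_cast h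
  exact_mod_cast Int.lt_add_one_iff.1 h1

/-- Functionals exhibiting the points of `KNpoints` as vertices. -/
def knSupport : Fin 15 → Fin 7 → ℤ :=
  ![![1, 0, 0, 0, 0, 0, 0], ![0, 2, 0, -2, 0, 1, 1], ![0, 0, 1, 0, 0, 0, 0],
    ![0, 0, 0, 1, 0, 0, 0], ![0, 0, 0, 0, 1, 0, 0], ![-2, 0, 1, 1, 0, 2, -1],
    ![1, 1, -1, -2, -2, 0, 2], ![-1, -1, -1, 0, 0, -1, -1], ![-1, 0, -1, -1, -1, -1, 1],
    ![0, -1, -1, -1, -1, -1, 1], ![-1, 1, -1, -1, 1, 0, -1], ![-1, -1, -1, 1, -1, 1, -1],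
    ![-1, 1, -1, -1, 0, -1, 0], ![-1, -1, -1, -1, -1, 0, -1], ![-1, 0, -1, -1, -1, -1, -1]]

theorem vertexSet_convexHull_knPoint :
    vertexSet (convexHull ℝ (Set.range knPoint)) = Set.range knPoint := by
  have key : ∀ i j, j ≠ i →
      knSupport i ⬝ᵥ knVec j ≤ knSupport i ⬝ᵥ knVec i - 1 := by decide +kernel
  refine extremePoints_convexHull_subset.antisymm ?_
  rintro _ ⟨i, rfl⟩
  by_contra hi
  have h := le_of_forall_vertexSet_le ((Set.finite_range knPoint).isCompact_convexHull ℝ)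
    (convex_convexHull ℝ _) (intFunctional (knSupport i))
    (c := ((knSupport i ⬝ᵥ knVec i - 1 : ℤ) : ℝ)) (fun v hv => by
      obtain ⟨j, rfl⟩ := extremePoints_convexHull_subset hv
      rw [intFunctional_knPoint]
      exact_mod_cast key i j fun hij => hi (hij ▸ hv)) _ (subset_convexHull ℝ _ ⟨i, rfl⟩)
  rw [intFunctional_knPoint] at h
  have h1 : knSupport i ⬝ᵥ knVec i ≤ knSupport i ⬝ᵥ knVec i - 1 := by exact_mod_cast h
  omega

theorem isLatticePolytope_convexHull_knPoint :
    IsLatticePolytope (convexHull ℝ (Set.range knPoint)) := by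
  refine ⟨⟨(Set.finite_range knPoint).toFinset, fun x hx => ?_, by simp⟩, ?_⟩
  · obtain ⟨i, rfl⟩ := (Set.finite_range knPoint).mem_toFinset.1 hx
    exact isLatticePoint_intCast (knVec i)
  · exact affineSpan_eq_top_of_nonempty_interior ⟨0, interior_mono (subset_convexHull ℝ _)
      zero_mem_interior_convexHull_knPoint⟩

/-- Whether both `e₄` and `-e₂ - e₄ + e₆` lie in the facets of the given type. -/
def knSpecial (t : Fin 12) : Bool := t = 3 || t = 4 || t = 6

/-- The vertices of a facet which do not depend on the choices. -/
def knSlotBase : Fin 12 → Fin 3 → Fin 15 :=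
  ![![1, 5, 6], ![1, 5, 10], ![5, 7, 10], ![5, 7, 13], ![5, 9, 13], ![5, 6, 9], ![7, 9, 13],
    ![1, 6, 12], ![1, 10, 12], ![7, 10, 12], ![6, 9, 12], ![7, 9, 12]]

/-- The indices of the vertices of a facet. -/
def knSlot (t : Fin 12) (c₁ c₃ c₄ c₅ : Bool) : Fin 7 → Fin 15 :=
  ![if c₁ then 0 else 8, knSlotBase t 0, if c₃ then 2 else 11,
    if c₄ || knSpecial t then 3 else 13, if c₅ then 4 else 14, knSlotBase t 1, knSlotBase t 2]

/-- The coordinates of `e₂`, `e₆`, `e₇` with respect to the vertices of a facet; only the vertices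
in slots `1`, `3`, `5`, `6` are involved. -/
def knCoordBase : Fin 12 → Fin 3 → Fin 4 → ℤ :=
  ![![![1, 0, 0, 0], ![0, 0, 1, 0], ![0, 0, 0, 1]],
    ![![1, 0, 0, 0], ![0, 0, 1, 0], ![1, 0, 0, -1]],
    ![![0, 0, -1, 1], ![1, 0, 0, 0], ![0, 0, -1, 0]],
    ![![1, -1, 0, -1], ![1, 0, 0, 0], ![0, 0, -1, 0]],
    ![![1, -1, 0, -1], ![1, 0, 0, 0], ![1, -1, 1, -1]],
    ![![0, 0, 1, -1], ![1, 0, 0, 0], ![0, 0, 1, 0]],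
    ![![-1, 0, -1, 0], ![-1, 1, -1, 1], ![-1, 0, 0, 0]],
    ![![1, 0, 0, 0], ![1, 0, 0, -1], ![0, 0, 1, 0]],
    ![![1, 0, 0, 0], ![1, 0, 0, -1], ![1, 0, -1, 0]],
    ![![-1, 0, 1, 0], ![-1, 0, 1, -1], ![-1, 0, 0, 0]],
    ![![1, 0, -1, 0], ![1, 0, -1, -1], ![1, 0, 0, 0]],
    ![![-1, 0, -1, 0], ![-1, 0, -1, -1], ![-1, 0, 0, 0]]]

/-- The coordinates of the standard basis with respect to the vertices of a facet. -/
def knCoord (t : Fin 12) (c₁ c₃ c₄ c₅ : Bool) : Matrix (Fin 7) (Fin 7) ℤ :=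
  let row (j : Fin 3) : Fin 7 → ℤ :=
    ![0, knCoordBase t j 0, 0, knCoordBase t j 1, 0, knCoordBase t j 2, knCoordBase t j 3]
  ![if c₁ then Pi.single 0 1 else row 2 - Pi.single 0 1, row 0,
    if c₃ then Pi.single 2 1 else row 1 - Pi.single 2 1,
    if c₄ || knSpecial t then Pi.single 3 1 else row 1 - row 0 - Pi.single 3 1,
    if c₅ then Pi.single 4 1 else row 0 - row 2 - Pi.single 4 1, row 1, row 2]

theorem isUnimodularBasis_knFacet (t : Fin 12) (c₁ c₃ c₄ c₅ : Bool) : IsUnimodularBasis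
    {v ∈ Set.range knPoint | intFunctional (knFacet t c₁ c₃ c₄ c₅) v = 1} := by
  have hinj : ∀ t c₁ c₃ c₄ c₅, Function.Injective (knSlot t c₁ c₃ c₄ c₅) := by decide +kernel
  have htight : ∀ t c₁ c₃ c₄ c₅ i, knFacet t c₁ c₃ c₄ c₅ ⬝ᵥ knVec i = 1 ↔
      ∃ j, knSlot t c₁ c₃ c₄ c₅ j = i := by decide +kernel
  have hinv : ∀ t c₁ c₃ c₄ c₅ i j, ∑ k, knCoord t c₁ c₃ c₄ c₅ i k *
      knVec (knSlot t c₁ c₃ c₄ c₅ k) j = if i = j then 1 else 0 := by decide +kernel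
  refine ⟨fun j => knPoint (knSlot t c₁ c₃ c₄ c₅ j),
    knPoint_injective.comp (hinj t c₁ c₃ c₄ c₅), ?_,
    fun j => isLatticePoint_intCast (knVec (knSlot t c₁ c₃ c₄ c₅ j)), ?_⟩
  · ext v
    constructor
    · rintro ⟨j, rfl⟩
      refine ⟨⟨_, rfl⟩, ?_⟩
      rw [intFunctional_knPoint, (htight t c₁ c₃ c₄ c₅ _).2 ⟨j, rfl⟩, Int.cast_one]
    · rintro ⟨⟨i, rfl⟩, hi⟩
      rw [intFunctional_knPoint] at hi
      obtain ⟨j, rfl⟩ := (htight t c₁ c₃ c₄ c₅ i).1 (by exact_mod_cast hi)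
      exact ⟨j, rfl⟩
  · let M : Matrix (Fin 7) (Fin 7) ℤ := Matrix.of fun j => knVec (knSlot t c₁ c₃ c₄ c₅ j)
    have hM : (Matrix.of fun j => knPoint (knSlot t c₁ c₃ c₄ c₅ j)) =
        (Int.castRingHom ℝ).mapMatrix M := by
      ext i j
      simp [M, knPoint]
    have hNM : knCoord t c₁ c₃ c₄ c₅ * M = 1 := by
      ext i j
      rw [Matrix.mul_apply, Matrix.one_apply]
      exact hinv t c₁ c₃ c₄ c₅ i j
    have hdet := Int.isUnit_iff_abs_eq.1 (Matrix.isUnit_det_of_left_inverse hNM)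
    rw [hM, ← RingHom.map_det]
    have : ((|M.det| : ℤ) : ℝ) = 1 := by rw [hdet, Int.cast_one]
    simpa using this

/-- A facet of a polytope containing the origin in its interior is given by a functional which
is determined by its values on the facet. -/
theorem IsFacetOf.exists_functional {n : ℕ} (hn : n ≠ 1) {Q F : Set (Fin n → ℝ)}
    (hF : IsFacetOf F Q) (h0 : 0 ∈ interior Q) :
    ∃ l : (Fin n → ℝ) →ₗ[ℝ] ℝ, (∀ x ∈ Q, l x ≤ 1) ∧ F = {x ∈ Q | l x = 1} ∧
      ∀ g : (Fin n → ℝ) →ₗ[ℝ] ℝ, (∀ x ∈ F, g x = 1) → g = l := by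
  obtain ⟨hexp, hrank⟩ := hF
  obtain ⟨x₀, hx₀⟩ : F.Nonempty := by
    by_contra hne
    rw [Set.not_nonempty_iff_eq_empty] at hne
    rw [hne, vectorSpan_empty, finrank_bot] at hrank
    omega
  obtain ⟨f, hf⟩ := hexp ⟨x₀, hx₀⟩
  have hx₀' := hf.le hx₀
  have hpos : 0 < f x₀ := by
    refine lt_of_le_of_ne (by simpa using hx₀'.2 0 (interior_subset h0)) fun hz => ?_
    have h1 := eq_zero_of_nonpos_of_mem_interior h0 (f : (Fin n → ℝ) →ₗ[ℝ] ℝ)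
      fun x hx => hz ▸ hx₀'.2 x hx
    have h2 (x) : f x = 0 := LinearMap.congr_fun h1 x
    have h3 : F = Q := by
      rw [hf]
      ext x
      simp [h2]
    have h4 : vectorSpan ℝ Q = ⊤ := by
      rw [← direction_affineSpan, affineSpan_eq_top_of_nonempty_interior
        ⟨0, interior_mono (subset_convexHull ℝ Q) h0⟩, AffineSubspace.direction_top]
    rw [h3, h4, finrank_top, Module.finrank_fin_fun] at hrank
    omega
  refine ⟨(f x₀)⁻¹ • (f : (Fin n → ℝ) →ₗ[ℝ] ℝ), fun x hx => ?_, ?_, fun g hg => ?_⟩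
  · rw [LinearMap.smul_apply, smul_eq_mul, inv_mul_le_one₀ hpos]
    exact hx₀'.2 x hx
  · conv_lhs => rw [hf]
    ext x
    refine and_congr_right fun hx => ?_
    rw [LinearMap.smul_apply, smul_eq_mul, inv_mul_eq_one₀ hpos.ne']
    exact ⟨fun h => le_antisymm (h x₀ hx₀'.1) (hx₀'.2 x hx), fun h y hy => h ▸ hx₀'.2 y hy⟩
  · have hle (k : (Fin n → ℝ) →ₗ[ℝ] ℝ) (c : ℝ) (hk : ∀ x ∈ F, k x = c) :
        vectorSpan ℝ F ≤ LinearMap.ker k := by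
      refine Submodule.span_le.2 ?_
      rintro _ ⟨x, hx, y, hy, rfl⟩
      simp [hk x hx, hk y hy]
    have hfF : ∀ x ∈ F, f x = f x₀ := fun x hx =>
      le_antisymm (hx₀'.2 x (hf.le hx).1) ((hf.le hx).2 x₀ hx₀'.1)
    have hker : vectorSpan ℝ F = LinearMap.ker (f : (Fin n → ℝ) →ₗ[ℝ] ℝ) := by
      refine Submodule.eq_of_le_of_finrank_le (hle f (f x₀) hfF) ?_
      have hne : (f : (Fin n → ℝ) →ₗ[ℝ] ℝ) ≠ 0 := fun h => hpos.ne' (LinearMap.congr_fun h x₀)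
      have h1 := LinearMap.finrank_range_add_finrank_ker (f : (Fin n → ℝ) →ₗ[ℝ] ℝ)
      rw [LinearMap.range_eq_top.2 (LinearMap.surjective hne), finrank_top,
        Module.finrank_self, Module.finrank_fin_fun] at h1
      omega
    refine LinearMap.ext fun y => ?_
    have hy : y - ((f x₀)⁻¹ * f y) • x₀ ∈ vectorSpan ℝ F := by
      rw [hker, LinearMap.mem_ker]
      have := hpos.ne'
      simp
      field_simp
      ring
    have h2 := hle g 1 hg hy
    rw [LinearMap.mem_ker, map_sub, map_smul, hg x₀ hx₀, smul_eq_mul, mul_one, sub_eq_zero] at h2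
    rw [h2]
    rfl

theorem isUnimodularBasis_of_isFacetOf {F : Set (Fin 7 → ℝ)}
    (hF : IsFacetOf F (convexHull ℝ (Set.range knPoint))) :
    IsUnimodularBasis (vertexSet (convexHull ℝ (Set.range knPoint)) ∩ F) := by
  classical
  obtain ⟨l, hl, rfl, huniq⟩ := hF.exists_functional (by norm_num)
    zero_mem_interior_convexHull_knPoint
  have hl' (i : Fin 15) : l (knPoint i) ≤ 1 := hl _ (subset_convexHull ℝ _ ⟨i, rfl⟩)
  obtain ⟨t, c₁, c₃, c₄, c₅, hle⟩ := exists_le_knFacet l hl'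
    (∑ i with l (knPoint i) = 1, knPoint i)
  set g := intFunctional (knFacet t c₁ c₃ c₄ c₅) with hg
  have hg1 (i : Fin 15) : g (knPoint i) ≤ 1 := intFunctional_knFacet_le_one t c₁ c₃ c₄ c₅ i
  have htight (i : Fin 15) (hi : l (knPoint i) = 1) : g (knPoint i) = 1 := by
    rw [map_sum, map_sum] at hle
    have h1 : ∀ j ∈ Finset.univ.filter (fun i => l (knPoint i) = 1),
        g (knPoint j) ≤ l (knPoint j) := fun j hj => by
      rw [(Finset.mem_filter.1 hj).2]
      exact hg1 j
    have h2 := (Finset.sum_eq_sum_iff_of_le h1).1 (le_antisymm (Finset.sum_le_sum h1) hle) i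
      (by simpa using hi)
    rw [h2, hi]
  set Q := convexHull ℝ (Set.range knPoint)
  have hQ : IsCompact Q := (Set.finite_range knPoint).isCompact_convexHull ℝ
  have hFc : IsCompact {x ∈ Q | l x = 1} :=
    hQ.inter_right (isClosed_eq l.continuous_of_finiteDimensional continuous_const)
  have hFconv : Convex ℝ {x ∈ Q | l x = 1} :=
    (convex_convexHull ℝ _).inter (convex_hyperplane l.isLinear 1)
  have hvert : ∀ v ∈ vertexSet {x ∈ Q | l x = 1}, g v = 1 := by
    intro v hv
    obtain ⟨i, rfl⟩ := extremePoints_convexHull_subset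
      (hF.1.isExtreme.extremePoints_subset_extremePoints hv)
    exact htight i (extremePoints_subset hv).2
  have hgl : g = l := by
    refine huniq g fun x hx => le_antisymm ?_ ?_
    · exact le_of_forall_vertexSet_le hFc hFconv g (fun v hv => (hvert v hv).le) x hx
    · have := le_of_forall_vertexSet_le hFc hFconv (-g) (c := -1)
        (fun v hv => by rw [LinearMap.neg_apply, hvert v hv]) x hx
      rw [LinearMap.neg_apply] at this
      linarith
  have hset : vertexSet Q ∩ {x ∈ Q | l x = 1} = {v ∈ Set.range knPoint | g v = 1} := by
    rw [vertexSet_convexHull_knPoint, hgl]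
    ext v
    constructor
    · exact fun h => ⟨h.1, h.2.2⟩
    · exact fun h => ⟨h.1, subset_convexHull ℝ _ h.1, h.2⟩
  rw [hset]
  exact isUnimodularBasis_knFacet t c₁ c₃ c₄ c₅

theorem isSmoothFano_convexHull_knPoint : IsSmoothFano (convexHull ℝ (Set.range knPoint)) :=
  ⟨isLatticePolytope_convexHull_knPoint, zero_mem_interior_convexHull_knPoint,
    fun _ => isUnimodularBasis_of_isFacetOf⟩

/-- At most `n` elements lie on a hyperplane supporting a set satisfying `SmoothFanoVertices`. -/
theorem SmoothFanoVertices.card_le {n : ℕ} {S : Set (Fin n → ℝ)} (h : SmoothFanoVertices S)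
    (l : (Fin n → ℝ) →ₗ[ℝ] ℝ) (hl : ∀ v ∈ S, l v ≤ 1) (T : Finset (Fin n → ℝ))
    (hT : ∀ v ∈ T, v ∈ S ∧ l v = 1) : T.card ≤ n := by
  classical
  obtain ⟨b, hb, -⟩ := h.exists_basis l hl
  have hsub : T ⊆ Finset.univ.image b := fun v hv => by
    obtain ⟨i, rfl⟩ := hb v (hT v hv).1 (hT v hv).2
    exact Finset.mem_image_of_mem b (Finset.mem_univ i)
  simpa using (Finset.card_le_card hsub).trans Finset.card_image_le

/-- Functionals obstructing the deletion of a vertex. -/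
def knDeletion : Fin 15 → Fin 7 → ℤ :=
  ![![1, 0, 0, 0, 0, 0, 0], ![0, 2, 0, 1, 0, 1, 1], ![0, 0, 1, 0, 0, 0, 0],
    ![0, 0, 0, 1, 0, 0, 0], ![0, 0, 0, 0, 1, 0, 0], ![1, 0, 1, 1, 0, 2, -1],
    ![1, 1, 1, 1, 1, 0, 2], ![-1, -1, -1, 0, 0, -1, -1], ![-1, 0, 0, 0, 0, 0, 0],
    ![0, -1, -1, 0, -1, -1, 0], ![-2, 1, 1, -1, 1, 1, -1], ![0, 0, -1, 0, 0, 0, 0],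
    ![0, 0, -1, -1, 0, -1, 0], ![0, 0, 0, -1, 0, 0, 0], ![0, 0, 0, 0, -1, 0, 0]]

theorem not_smoothFanoVertices_sdiff (j : Fin 15) :
    ¬ SmoothFanoVertices (Set.range knPoint \ {knPoint j}) := by
  have key : ∀ j, (knDeletion j ≠ 0 ∧ ∀ i, i ≠ j → knDeletion j ⬝ᵥ knVec i ≤ 0) ∨
      ((∀ i, i ≠ j → knDeletion j ⬝ᵥ knVec i ≤ 1) ∧
        7 < (Finset.univ.filter fun i => i ≠ j ∧ knDeletion j ⬝ᵥ knVec i = 1).card) := by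
    decide +kernel
  intro h
  rcases key j with ⟨hne, hle⟩ | ⟨hle, hcard⟩
  · have h0 := h.eq_zero_of_nonpos (intFunctional (knDeletion j)) (by
      rintro _ ⟨⟨i, rfl⟩, hi⟩
      rw [intFunctional_knPoint]
      exact_mod_cast hle i fun hij => hi (by rw [hij]; rfl))
    refine hne ?_
    have h1 := (dotProductEquiv ℝ (Fin 7)).map_eq_zero_iff.1 h0
    ext k
    simpa using congrFun h1 k
  · refine absurd (h.card_le (intFunctional (knDeletion j)) ?_
      ((Finset.univ.filter fun i => i ≠ j ∧ knDeletion j ⬝ᵥ knVec i = 1).map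
        ⟨knPoint, knPoint_injective⟩) fun v hv => ?_) (by
        rw [Finset.card_map]; exact not_le.2 hcard)
    · rintro _ ⟨⟨i, rfl⟩, hi⟩
      rw [intFunctional_knPoint]
      exact_mod_cast hle i fun hij => hi (by rw [hij]; rfl)
    · obtain ⟨i, hi, rfl⟩ := Finset.mem_map.1 hv
      obtain ⟨-, hij, hi1⟩ := Finset.mem_filter.1 hi
      refine ⟨⟨⟨i, rfl⟩, fun hv => hij (knPoint_injective hv)⟩, ?_⟩
      change intFunctional (knDeletion j) (knPoint i) = 1
      rw [intFunctional_knPoint, hi1, Int.cast_one]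

/-- If a lattice point `w` is inserted beyond a facet supported by `u'` but not beyond an adjacent
facet supported by `u`, then the values of the two functionals at `w` differ by the lattice length
`d` of `u' - u`. -/
theorem SmoothFanoVertices.sub_eq_of_adjacent {n : ℕ} {S : Set (Fin n → ℝ)} {w : Fin n → ℤ}
    (h : SmoothFanoVertices (S ∪ {fun i => (w i : ℝ)})) {u u' : Fin n → ℤ}
    (hu : ∀ v ∈ S, intFunctional u v ≤ 1) (hu' : ∀ v ∈ S, intFunctional u' v ≤ 1)
    {T : Finset (Fin n → ℝ)} (hTS : ∀ v ∈ T, v ∈ S) (hT : n ≤ T.card + 1)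
    (hwT : (fun i => (w i : ℝ)) ∉ T)
    (hTu : ∀ v ∈ T, intFunctional u v = 1 ∧ intFunctional u' v = 1)
    {d : ℤ} (hd : 0 ≤ d) (hdvd : ∀ i, d ∣ u' i - u i) (hunit : ∃ i, u' i - u i ∣ d)
    (hw : u ⬝ᵥ w ≤ 0) (hw' : 2 ≤ u' ⬝ᵥ w) : u' ⬝ᵥ w - u ⬝ᵥ w = d := by
  classical
  have hwR : ((u ⬝ᵥ w : ℤ) : ℝ) ≤ 0 := by exact_mod_cast hw
  have hwR' : 2 ≤ ((u' ⬝ᵥ w : ℤ) : ℝ) := by exact_mod_cast hw'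
  set f := u ⬝ᵥ w with hf
  set f' := u' ⬝ᵥ w with hf'
  have hpos : (0 : ℝ) < f' - f := by linarith
  set s : ℝ := (1 - f) / (f' - f) with hs
  have hs0 : 0 ≤ s := div_nonneg (by linarith) hpos.le
  have hs1 : s ≤ 1 := (div_le_one hpos).2 (by linarith)
  have hsf : (1 - s) * f + s * f' = 1 := by
    rw [hs]
    field_simp
    ring
  obtain ⟨b, hb, hspan⟩ := h.exists_basis ((1 - s) • intFunctional u + s • intFunctional u') (by
    intro v hv
    simp only [LinearMap.add_apply, LinearMap.smul_apply, smul_eq_mul]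
    rcases hv with hv | rfl
    · nlinarith [hu v hv, hu' v hv]
    · rw [intFunctional_intCast, intFunctional_intCast, hsf])
  have hsub : insert (fun i => (w i : ℝ)) T ⊆ Finset.univ.image b := by
    intro v hv
    obtain ⟨i, rfl⟩ : v ∈ Set.range b := by
      rcases Finset.mem_insert.1 hv with rfl | hv
      · refine hb _ (Or.inr rfl) ?_
        simp only [LinearMap.add_apply, LinearMap.smul_apply, smul_eq_mul, intFunctional_intCast]
        exact hsf
      · refine hb _ (Or.inl (hTS v hv)) ?_
        simp only [LinearMap.add_apply, LinearMap.smul_apply, smul_eq_mul, hTu v hv]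
        ring
    exact Finset.mem_image_of_mem b (Finset.mem_univ i)
  have heq := Finset.eq_of_subset_of_card_le hsub (by
    rw [Finset.card_insert_of_notMem hwT]
    exact Finset.card_image_le.trans (by simpa using hT))
  have hval (j : Fin n) : ∃ m : ℤ, intFunctional (u' - u) (b j) = ((m * (f' - f) : ℤ) : ℝ) := by
    have hsubst (v : Fin n → ℝ) :
        intFunctional (u' - u) v = intFunctional u' v - intFunctional u v := by
      simp [intFunctional_apply, sub_mul]
    have hj : b j ∈ insert (fun i => (w i : ℝ)) T :=
      heq ▸ Finset.mem_image_of_mem b (Finset.mem_univ j)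
    rcases Finset.mem_insert.1 hj with hj | hj
    · refine ⟨1, ?_⟩
      rw [hj, hsubst, intFunctional_intCast, intFunctional_intCast]
      push_cast
      ring
    · refine ⟨0, ?_⟩
      rw [hsubst, (hTu _ hj).1, (hTu _ hj).2]
      simp
  choose m hm using hval
  obtain ⟨i, hi⟩ := hunit
  obtain ⟨k, hk⟩ := hspan (fun j => ((Pi.single i 1 : Fin n → ℤ) j : ℝ))
    (isLatticePoint_intCast (Pi.single i 1))
  have hdvd' : f' - f ∣ u' i - u i := by
    have h1 := congrArg (intFunctional (u' - u)) hk
    rw [intFunctional_intCast, dotProduct_single_one, map_sum] at h1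
    simp only [map_smul, hm, smul_eq_mul] at h1
    have h2 : (u' - u) i = ∑ j, k j * (m j * (f' - f)) := by exact_mod_cast h1
    rw [Pi.sub_apply] at h2
    rw [h2]
    exact Finset.dvd_sum fun j _ => (dvd_mul_left _ _).mul_left _
  have hmul : d ∣ f' - f := by
    rw [hf, hf', ← sub_dotProduct]
    exact Finset.dvd_sum fun j _ => (hdvd j).mul_right _
  exact Int.dvd_antisymm (by omega) hd (hdvd'.trans hi) hmul

/-- The facets supported by `u` and `u'` have at least six common vertices, and `d` is the lattice
length of `u' - u`. -/
abbrev KNAdjacent (u u' : Fin 7 → ℤ) (d : ℤ) : Prop :=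
  6 ≤ (Finset.univ.filter fun i => u ⬝ᵥ knVec i = 1 ∧ u' ⬝ᵥ knVec i = 1).card ∧
    (∀ j, d ∣ u' j - u j) ∧ ∃ j, u' j - u j ∣ d

theorem KNAdjacent.symm {u u' : Fin 7 → ℤ} {d : ℤ} (h : KNAdjacent u u' d) :
    KNAdjacent u' u d := by
  refine ⟨?_, fun j => (dvd_sub_comm).1 (h.2.1 j), h.2.2.imp fun j hj => ?_⟩
  · simpa only [and_comm] using h.1
  · rwa [← neg_sub, neg_dvd]

theorem KNAdjacent.sub_eq {w u u' : Fin 7 → ℤ} {d : ℤ} (hadj : KNAdjacent u u' d)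
    (hd : 0 ≤ d)
    (h : SmoothFanoVertices (Set.range knPoint ∪ {fun i => (w i : ℝ)}))
    (hwV : (fun i => (w i : ℝ)) ∉ Set.range knPoint) (hu : ∀ i, u ⬝ᵥ knVec i ≤ 1)
    (hu' : ∀ i, u' ⬝ᵥ knVec i ≤ 1) (hw : u ⬝ᵥ w ≤ 0) (hw' : 2 ≤ u' ⬝ᵥ w) :
    u' ⬝ᵥ w - u ⬝ᵥ w = d := by
  obtain ⟨hcard, hdvd, hunit⟩ := hadj
  have hle {u : Fin 7 → ℤ} (hu : ∀ i, u ⬝ᵥ knVec i ≤ 1) :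
      ∀ v ∈ Set.range knPoint, intFunctional u v ≤ 1 := by
    rintro _ ⟨i, rfl⟩
    rw [intFunctional_knPoint]
    exact_mod_cast hu i
  have hmem : ∀ v ∈ (Finset.univ.filter fun i => u ⬝ᵥ knVec i = 1 ∧ u' ⬝ᵥ knVec i = 1).map
      ⟨knPoint, knPoint_injective⟩, v ∈ Set.range knPoint ∧ intFunctional u v = 1 ∧
        intFunctional u' v = 1 := by
    intro v hv
    obtain ⟨i, hi, rfl⟩ := Finset.mem_map.1 hv
    obtain ⟨-, h1, h2⟩ := Finset.mem_filter.1 hi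
    refine ⟨⟨i, rfl⟩, ?_, ?_⟩ <;> change intFunctional _ (knPoint i) = 1 <;>
      rw [intFunctional_knPoint]
    · rw [h1, Int.cast_one]
    · rw [h2, Int.cast_one]
  exact h.sub_eq_of_adjacent (hle hu) (hle hu') (fun v hv => (hmem v hv).1)
    (by rw [Finset.card_map]; omega) (fun hw => hwV (hmem _ hw).1) (fun v hv => (hmem v hv).2) hd
    hdvd hunit hw hw'

theorem knFacet_dotProduct_ne_one {w : Fin 7 → ℤ}
    (h : SmoothFanoVertices (Set.range knPoint ∪ {fun i => (w i : ℝ)}))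
    (hwV : (fun i => (w i : ℝ)) ∉ Set.range knPoint) (t : Fin 12) (c₁ c₃ c₄ c₅ : Bool) :
    knFacet t c₁ c₃ c₄ c₅ ⬝ᵥ w ≠ 1 := by
  classical
  intro hw
  have hwR : intFunctional (knFacet t c₁ c₃ c₄ c₅) (fun i => (w i : ℝ)) = 1 := by
    rw [intFunctional_intCast, hw, Int.cast_one]
  obtain ⟨b, hinj, hb, -⟩ := isUnimodularBasis_knFacet t c₁ c₃ c₄ c₅
  have hmem (v : Fin 7 → ℝ) (hv : v ∈ Finset.univ.image b) : v ∈ Set.range knPoint ∧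
      intFunctional (knFacet t c₁ c₃ c₄ c₅) v = 1 := by
    obtain ⟨i, -, rfl⟩ := Finset.mem_image.1 hv
    exact hb.le ⟨i, rfl⟩
  have hcard := h.card_le (intFunctional (knFacet t c₁ c₃ c₄ c₅)) (by
    rintro _ (⟨i, rfl⟩ | rfl)
    · exact intFunctional_knFacet_le_one t c₁ c₃ c₄ c₅ i
    · exact hwR.le) (insert (fun i => (w i : ℝ)) (Finset.univ.image b)) (fun v hv => by
    rcases Finset.mem_insert.1 hv with rfl | hv
    · exact ⟨Or.inr rfl, hwR⟩
    · exact ⟨Or.inl (hmem v hv).1, (hmem v hv).2⟩)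
  rw [Finset.card_insert_of_notMem fun hw => hwV (hmem _ hw).1,
    Finset.card_image_of_injective _ hinj] at hcard
  simp at hcard

/-- A new vertex lies beyond all or none of the facets of type different from `11`. -/
theorem knFacet_nonpos_iff {w : Fin 7 → ℤ}
    (h : SmoothFanoVertices (Set.range knPoint ∪ {fun i => (w i : ℝ)}))
    (hwV : (fun i => (w i : ℝ)) ∉ Set.range knPoint) (t : Fin 12) (ht : t ≠ 11)
    (c₁ c₃ c₄ c₅ : Bool) : knFacet t c₁ c₃ c₄ c₅ ⬝ᵥ w ≤ 0 ↔
      knFacet 0 true true true true ⬝ᵥ w ≤ 0 := by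
  have step {t t' : Fin 12} {c₁ c₃ c₄ c₅ c₁' c₃' c₄' c₅' : Bool}
      (hadj : KNAdjacent (knFacet t c₁ c₃ c₄ c₅) (knFacet t' c₁' c₃' c₄' c₅') 1) :
      knFacet t c₁ c₃ c₄ c₅ ⬝ᵥ w ≤ 0 ↔ knFacet t' c₁' c₃' c₄' c₅' ⬝ᵥ w ≤ 0 := by
    have h1 := knFacet_dotProduct_ne_one h hwV t c₁ c₃ c₄ c₅
    have h2 := knFacet_dotProduct_ne_one h hwV t' c₁' c₃' c₄' c₅'
    have h3 := hadj.sub_eq zero_le_one h hwV (knFacet_le_one t c₁ c₃ c₄ c₅)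
      (knFacet_le_one t' c₁' c₃' c₄' c₅')
    have h4 := hadj.symm.sub_eq zero_le_one h hwV (knFacet_le_one t' c₁' c₃' c₄' c₅')
      (knFacet_le_one t c₁ c₃ c₄ c₅)
    omega
  have base : ∀ p ∈ [((0 : Fin 12), (7 : Fin 12)), (0, 1), (1, 8), (1, 2), (2, 3), (3, 4), (4, 5),
      (3, 6), (7, 10), (8, 9)], ∀ c₁ c₃ c₄ c₅,
      KNAdjacent (knFacet p.1 c₁ c₃ c₄ c₅) (knFacet p.2 c₁ c₃ c₄ c₅) 1 := by decide +kernel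
  have hbase (t t' : Fin 12) (hp : (t, t') ∈ [((0 : Fin 12), (7 : Fin 12)), (0, 1), (1, 8), (1, 2),
      (2, 3), (3, 4), (4, 5), (3, 6), (7, 10), (8, 9)]) (c₁ c₃ c₄ c₅ : Bool) :
      knFacet t c₁ c₃ c₄ c₅ ⬝ᵥ w ≤ 0 ↔ knFacet t' c₁ c₃ c₄ c₅ ⬝ᵥ w ≤ 0 :=
    step (base (t, t') hp c₁ c₃ c₄ c₅)
  have flip₁ : ∀ c₃ c₄ c₅,
      KNAdjacent (knFacet 0 false c₃ c₄ c₅) (knFacet 0 true c₃ c₄ c₅) 1 := by decide +kernel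
  have flip₃ : ∀ c₁ c₄ c₅,
      KNAdjacent (knFacet 0 c₁ false c₄ c₅) (knFacet 0 c₁ true c₄ c₅) 1 := by decide +kernel
  have flip₄ : ∀ c₁ c₃ c₅,
      KNAdjacent (knFacet 2 c₁ c₃ false c₅) (knFacet 2 c₁ c₃ true c₅) 1 := by decide +kernel
  have flip₅ : ∀ c₁ c₃ c₄,
      KNAdjacent (knFacet 1 c₁ c₃ c₄ false) (knFacet 1 c₁ c₃ c₄ true) 1 := by decide +kernel
  have h01 := hbase 0 1 (by decide)
  have h12 := hbase 1 2 (by decide)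
  have hzero : knFacet t c₁ c₃ c₄ c₅ ⬝ᵥ w ≤ 0 ↔ knFacet 0 c₁ c₃ c₄ c₅ ⬝ᵥ w ≤ 0 := by
    have e1 := (h01 c₁ c₃ c₄ c₅).symm
    have e2 := (h12 c₁ c₃ c₄ c₅).symm.trans e1
    have e3 := (hbase 2 3 (by decide) c₁ c₃ c₄ c₅).symm.trans e2
    have e4 := (hbase 3 4 (by decide) c₁ c₃ c₄ c₅).symm.trans e3
    have e7 := (hbase 0 7 (by decide) c₁ c₃ c₄ c₅).symm
    have e8 := (hbase 1 8 (by decide) c₁ c₃ c₄ c₅).symm.trans e1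
    have ht' : t = 0 ∨ t = 1 ∨ t = 2 ∨ t = 3 ∨ t = 4 ∨ t = 5 ∨ t = 6 ∨ t = 7 ∨ t = 8 ∨ t = 9 ∨
        t = 10 := by omega
    rcases ht' with rfl | rfl | rfl | rfl | rfl | rfl | rfl | rfl | rfl | rfl | rfl
    exacts [Iff.rfl, e1, e2, e3, e4, (hbase 4 5 (by decide) c₁ c₃ c₄ c₅).symm.trans e4,
      (hbase 3 6 (by decide) c₁ c₃ c₄ c₅).symm.trans e3, e7, e8,
      (hbase 8 9 (by decide) c₁ c₃ c₄ c₅).symm.trans e8,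
      (hbase 7 10 (by decide) c₁ c₃ c₄ c₅).symm.trans e7]
  have h₁ : knFacet 0 c₁ c₃ c₄ c₅ ⬝ᵥ w ≤ 0 ↔ knFacet 0 true c₃ c₄ c₅ ⬝ᵥ w ≤ 0 := by
    cases c₁
    exacts [step (flip₁ c₃ c₄ c₅), Iff.rfl]
  have h₃ : knFacet 0 true c₃ c₄ c₅ ⬝ᵥ w ≤ 0 ↔ knFacet 0 true true c₄ c₅ ⬝ᵥ w ≤ 0 := by
    cases c₃
    exacts [step (flip₃ true c₄ c₅), Iff.rfl]
  have h₄ : knFacet 0 true true c₄ c₅ ⬝ᵥ w ≤ 0 ↔ knFacet 0 true true true c₅ ⬝ᵥ w ≤ 0 := by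
    rw [h01, h12, h01, h12]
    cases c₄
    exacts [step (flip₄ true true c₅), Iff.rfl]
  have h₅ : knFacet 0 true true true c₅ ⬝ᵥ w ≤ 0 ↔ knFacet 0 true true true true ⬝ᵥ w ≤ 0 := by
    rw [h01, h01]
    cases c₅
    exacts [step (flip₅ true true true), Iff.rfl]
  rw [hzero, h₁, h₃, h₄, h₅]

theorem knFacet_nonpos {w : Fin 7 → ℤ}
    (h : SmoothFanoVertices (Set.range knPoint ∪ {fun i => (w i : ℝ)}))
    (hwV : (fun i => (w i : ℝ)) ∉ Set.range knPoint) (t : Fin 12) (ht : t ≠ 11)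
    (c₁ c₃ c₄ c₅ : Bool) : knFacet t c₁ c₃ c₄ c₅ ⬝ᵥ w ≤ 0 := by
  by_contra hpos
  rw [knFacet_nonpos_iff h hwV t ht] at hpos
  have key (t : Fin 12) (ht : t ≠ 11) (c₁ c₃ c₄ c₅ : Bool) : 1 ≤ knFacet t c₁ c₃ c₄ c₅ ⬝ᵥ w := by
    by_contra! hlt
    exact hpos ((knFacet_nonpos_iff h hwV t ht c₁ c₃ c₄ c₅).1 (Int.lt_add_one_iff.1 hlt))
  have hsum : knFacet 0 false true false true + knFacet 3 false false true true +
      knFacet 9 true true false false + knFacet 10 true false true false +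
      (knFacet 0 false true true true + knFacet 3 false false true true +
        knFacet 9 true true true false + knFacet 10 true false false false) = 0 := by
    decide +kernel
  have := congrArg (· ⬝ᵥ w) hsum
  simp only [add_dotProduct, zero_dotProduct] at this
  linarith [key 0 (by decide) false true false true, key 3 (by decide) false false true true,
    key 9 (by decide) true true false false, key 10 (by decide) true false true false,
    key 0 (by decide) false true true true, key 9 (by decide) true true true false,
    key 10 (by decide) true false false false]

theorem not_smoothFanoVertices_union {w : Fin 7 → ℤ}
    (hwV : (fun i => (w i : ℝ)) ∉ Set.range knPoint) :
    ¬ SmoothFanoVertices (Set.range knPoint ∪ {fun i => (w i : ℝ)}) := by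
  intro h
  have hneg := knFacet_nonpos h hwV
  have hne := knFacet_dotProduct_ne_one h hwV 11
  have hadj : ∀ c₁ c₃ c₄ c₅, KNAdjacent (knFacet 9 c₁ c₃ c₄ c₅) (knFacet 11 c₁ c₃ c₄ c₅) 2 ∧
      KNAdjacent (knFacet 10 c₁ c₃ c₄ c₅) (knFacet 11 c₁ c₃ c₄ c₅) 2 ∧
      KNAdjacent (knFacet 6 c₁ c₃ c₄ c₅) (knFacet 11 c₁ c₃ c₄ c₅) 3 := by decide +kernel
  have hflip : ∀ c₁ c₃ c₄ c₅,
      KNAdjacent (knFacet 11 (!c₁) c₃ c₄ c₅) (knFacet 11 c₁ c₃ c₄ c₅) 3 ∧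
      KNAdjacent (knFacet 11 c₁ (!c₃) c₄ c₅) (knFacet 11 c₁ c₃ c₄ c₅) 5 ∧
      KNAdjacent (knFacet 11 c₁ c₃ (!c₄) c₅) (knFacet 11 c₁ c₃ c₄ c₅) 3 ∧
      KNAdjacent (knFacet 11 c₁ c₃ c₄ (!c₅)) (knFacet 11 c₁ c₃ c₄ c₅) 3 := by decide +kernel
  have sub_eq {t t' : Fin 12} {c₁ c₃ c₄ c₅ c₁' c₃' c₄' c₅' : Bool} {d : ℤ}
      (hadj : KNAdjacent (knFacet t c₁ c₃ c₄ c₅) (knFacet t' c₁' c₃' c₄' c₅') d) (hd : 0 ≤ d) :=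
    hadj.sub_eq hd h hwV (knFacet_le_one t c₁ c₃ c₄ c₅) (knFacet_le_one t' c₁' c₃' c₄' c₅')
  obtain ⟨c₁, c₃, c₄, c₅, hpos⟩ : ∃ c₁ c₃ c₄ c₅, 2 ≤ knFacet 11 c₁ c₃ c₄ c₅ ⬝ᵥ w := by
    by_contra! hlt
    refine h.notMem_convexHull _ (Or.inr rfl) ?_
    rw [Set.union_sdiff_right, Set.sdiff_singleton_eq_self hwV, mem_convexHull_knPoint_iff]
    intro t c₁ c₃ c₄ c₅
    rw [intFunctional_intCast]
    have : knFacet t c₁ c₃ c₄ c₅ ⬝ᵥ w ≤ 1 := by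
      by_cases ht : t = 11
      · rw [ht]
        exact Int.lt_add_one_iff.1 (hlt c₁ c₃ c₄ c₅)
      · exact (hneg t ht c₁ c₃ c₄ c₅).trans zero_le_one
    exact_mod_cast this
  have htwo (c₁ c₃ c₄ c₅ : Bool) (hpos : 2 ≤ knFacet 11 c₁ c₃ c₄ c₅ ⬝ᵥ w) :
      knFacet 11 c₁ c₃ c₄ c₅ ⬝ᵥ w = 2 := by
    have h1 := sub_eq (hadj c₁ c₃ c₄ c₅).1 (by norm_num) (hneg 9 (by decide) _ _ _ _) hpos
    have h2 := hneg 9 (by decide) c₁ c₃ c₄ c₅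
    omega
  have h9 := sub_eq (hadj c₁ c₃ c₄ c₅).1 (by norm_num) (hneg 9 (by decide) _ _ _ _) hpos
  have h10 := sub_eq (hadj c₁ c₃ c₄ c₅).2.1 (by norm_num) (hneg 10 (by decide) _ _ _ _) hpos
  have h6 := sub_eq (hadj c₁ c₃ c₄ c₅).2.2 (by norm_num) (hneg 6 (by decide) _ _ _ _) hpos
  have hval := htwo c₁ c₃ c₄ c₅ hpos
  obtain ⟨f₁, f₃, f₄, f₅⟩ := hflip c₁ c₃ c₄ c₅
  have dichotomy {a d : ℤ} (hd : 0 ≤ d) (ha : a ≠ 1) (ha' : 2 ≤ a → a = 2)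
      (had : a ≤ 0 → 2 - a = d) : a = 2 ∨ a = 2 - d := by omega
  have d₁ := dichotomy (by norm_num) (hne _ _ _ _) (htwo (!c₁) c₃ c₄ c₅)
    (fun h => hval ▸ sub_eq f₁ (by norm_num) h hpos)
  have d₃ := dichotomy (by norm_num) (hne _ _ _ _) (htwo c₁ (!c₃) c₄ c₅)
    (fun h => hval ▸ sub_eq f₃ (by norm_num) h hpos)
  have d₄ := dichotomy (by norm_num) (hne _ _ _ _) (htwo c₁ c₃ (!c₄) c₅)
    (fun h => hval ▸ sub_eq f₄ (by norm_num) h hpos)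
  have d₅ := dichotomy (by norm_num) (hne _ _ _ _) (htwo c₁ c₃ c₄ (!c₅))
    (fun h => hval ▸ sub_eq f₅ (by norm_num) h hpos)
  have hsum : ∀ c₁ c₃ c₄ c₅, (46 : ℤ) • knFacet 11 c₁ c₃ c₄ c₅ =
      (15 : ℤ) • knFacet 9 c₁ c₃ c₄ c₅ + (15 : ℤ) • knFacet 10 c₁ c₃ c₄ c₅ +
      (10 : ℤ) • knFacet 6 c₁ c₃ c₄ c₅ + (10 : ℤ) • knFacet 11 (!c₁) c₃ c₄ c₅ +
      (6 : ℤ) • knFacet 11 c₁ (!c₃) c₄ c₅ + (10 : ℤ) • knFacet 11 c₁ c₃ (!c₄) c₅ +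
      (10 : ℤ) • knFacet 11 c₁ c₃ c₄ (!c₅) := by
    decide +kernel
  have := congrArg (· ⬝ᵥ w) (hsum c₁ c₃ c₄ c₅)
  simp only [add_dotProduct, smul_dotProduct, smul_eq_mul] at this
  omega

theorem iIsolated_convexHull_knPoint : IIsolated (convexHull ℝ (Set.range knPoint)) := by
  refine iIsolated_of_not_smoothFanoVertices (by norm_num)
    (fun _ => eq_zero_of_mem_interior_convexHull_knPoint) ?_ ?_ <;>
    rw [vertexSet_convexHull_knPoint]
  · intro w hlat hwV
    choose z hz using hlat
    obtain rfl : w = fun j => (z j : ℝ) := funext hz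
    exact not_smoothFanoVertices_union hwV
  · rintro _ ⟨j, rfl⟩
    exact not_smoothFanoVertices_sdiff j

/-- The convex hull of the 15 lattice points above is an
I-isolated smooth Fano 7-polytope with 15 vertices. -/
theorem KN_polytope_is_I_isolated :
    IsSmoothFano (convexHull ℝ KNpoints) ∧
    IIsolated (convexHull ℝ KNpoints) ∧
    (vertexSet (convexHull ℝ KNpoints)).ncard = 15 := by
  rw [KNpoints_eq_range]
  refine ⟨isSmoothFano_convexHull_knPoint, iIsolated_convexHull_knPoint, ?_⟩
  rw [vertexSet_convexHull_knPoint, ← Set.image_univ,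
    Set.ncard_image_of_injective _ knPoint_injective, Set.ncard_univ, Nat.card_fin]
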